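/- arXiv:2501.01724 — 2 statements merged into one kernel-verified Lean document; each statement's English description precedes it below -/
import Mathlib

section
/- Let ρ0 ∈ (0,1) and let t ∈ (0, min(2^{−1/ρ0}, e^{−7/2})]. Then the function ρ ↦ E_ρ(−t^ρ) is strictly monotonically increasing on [ρ0, 1]; that is, for all ρ1, ρ2 with ρ0 ≤ ρ1 < ρ2 ≤ 1 one has E_{ρ1}(−t^{ρ1}) < E_{ρ2}(−t^{ρ2}). -/
open Real Filter Topology

/-- The two-parameter Mittag-Leffler function `E_{ρ,μ}(z)` (real version). -/
noncomputable def mittagLeffler (ρ μ z : ℝ) : ℝ := ∑' k : ℕ, z ^ k / Real.Gamma (ρ * k + μ)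

namespace MLaux

/-- log Gamma -/
noncomputable def lg (y : ℝ) : ℝ := Real.log (Real.Gamma y)
/-- digamma -/
noncomputable def psi (y : ℝ) : ℝ := deriv lg y

lemma lg_convex : ConvexOn ℝ (Set.Ioi 0) lg := Real.convexOn_log_Gamma

lemma Gamma_diff {y : ℝ} (hy : 0 < y) : DifferentiableAt ℝ Real.Gamma y := by
  apply Real.differentiableAt_Gamma
  intro m
  have : (0:ℝ) ≤ m := Nat.cast_nonneg m
  linarith

lemma lg_hasDeriv {y : ℝ} (hy : 0 < y) : HasDerivAt lg (psi y) y := by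
  have : DifferentiableAt ℝ lg y := (Gamma_diff hy).log (Real.Gamma_pos_of_pos hy).ne'
  exact this.hasDerivAt

lemma psi_add_one {y : ℝ} (hy : 0 < y) : psi (y + 1) = psi y + 1 / y := by
  have h1 : HasDerivAt (fun z => lg (z + 1)) (psi (y + 1)) y :=
    (lg_hasDeriv (by linarith : 0 < y + 1)).comp_add_const y 1
  have h2 : HasDerivAt (fun z => lg z + Real.log z) (psi y + y⁻¹) y :=
    (lg_hasDeriv hy).add (Real.hasDerivAt_log hy.ne')
  have h3 : (fun z => lg (z + 1)) =ᶠ[𝓝 y] (fun z => lg z + Real.log z) := by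
    filter_upwards [lt_mem_nhds hy] with z hz
    unfold lg
    rw [Real.Gamma_add_one hz.ne', Real.log_mul hz.ne' (Real.Gamma_pos_of_pos hz).ne']
    ring
  have h4 := h1.unique (h2.congr_of_eventuallyEq h3)
  rw [h4]; simp

lemma psi_one : psi 1 = -Real.eulerMascheroniConstant := by
  have h : HasDerivAt lg (deriv Real.Gamma 1 / Real.Gamma 1) 1 :=
    (Gamma_diff one_pos).hasDerivAt.log (by simp)
  have := (lg_hasDeriv one_pos).unique h
  rw [this, Real.eulerMascheroniConstant_eq_neg_deriv]; simp

lemma tangent_le {a b : ℝ} (ha : 0 < a) (hab : a ≤ b) : (b - a) * psi a ≤ lg b - lg a := by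
  rcases hab.eq_or_lt with rfl | h
  · simp
  have := lg_convex.le_slope_of_hasDerivAt (Set.mem_Ioi.2 ha) (Set.mem_Ioi.2 (ha.trans h)) h
    (lg_hasDeriv ha)
  rw [slope_def_field, le_div_iff₀ (by linarith)] at this
  linarith

lemma le_tangent {a b : ℝ} (ha : 0 < a) (hab : a ≤ b) : lg b - lg a ≤ (b - a) * psi b := by
  rcases hab.eq_or_lt with rfl | h
  · simp
  have := lg_convex.slope_le_of_hasDerivAt (Set.mem_Ioi.2 ha) (Set.mem_Ioi.2 (ha.trans h)) h
    (lg_hasDeriv (ha.trans h))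
  rw [slope_def_field, div_le_iff₀ (by linarith)] at this
  linarith

lemma psi_mono {a b : ℝ} (ha : 0 < a) (hab : a ≤ b) : psi a ≤ psi b := by
  rcases hab.eq_or_lt with rfl | h
  · simp
  have h1 := tangent_le ha hab
  have h2 := le_tangent ha hab
  have : (b - a) * psi a ≤ (b - a) * psi b := h1.trans h2
  exact le_of_mul_le_mul_left this (by linarith)

lemma tendsto_diff {a b : ℝ} (ha : 0 ≤ a) (hab : a ≤ b) (hb : b ≤ a + 1) {y : ℝ} (hy : 0 < y) :
    Tendsto (fun n : ℕ => psi (y + n + b) - psi (y + n + a)) atTop (𝓝 0) := by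
  have h0 : Tendsto (fun n : ℕ => 1 / (y + a + n)) atTop (𝓝 0) := by
    have : Tendsto (fun n : ℕ => y + a + (n:ℝ)) atTop atTop :=
      tendsto_atTop_add_const_left _ _ tendsto_natCast_atTop_atTop
    simpa [Function.comp_def] using tendsto_inv_atTop_zero.comp this
  refine squeeze_zero (fun n => ?_) (fun n => ?_) h0
  · have hn : (0:ℝ) ≤ n := Nat.cast_nonneg n
    have := psi_mono (show 0 < y + n + a by linarith) (show y + n + a ≤ y + n + b by linarith)
    linarith
  · have hn : (0:ℝ) ≤ n := Nat.cast_nonneg n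
    have h1 := psi_mono (show 0 < y + n + b by linarith)
      (show y + n + b ≤ y + n + a + 1 by linarith)
    have h2 := psi_add_one (show 0 < y + n + a by linarith)
    rw [show y + a + (n:ℝ) = y + n + a by ring]
    linarith

lemma F_step {a b y : ℝ} (ha : 0 ≤ a) (hb : 0 ≤ b) (hy : 0 < y) :
    psi (y + b) - psi (y + a) = (b - a) / ((y + a) * (y + b)) +
      (psi (y + 1 + b) - psi (y + 1 + a)) := by
  have h1 := psi_add_one (show 0 < y + a by linarith)
  have h2 := psi_add_one (show 0 < y + b by linarith)
  rw [show y + 1 + b = y + b + 1 by ring, show y + 1 + a = y + a + 1 by ring, h1, h2]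
  have : y + a ≠ 0 := by linarith
  have : y + b ≠ 0 := by linarith
  field_simp
  ring

lemma F_upper {a b : ℝ} (ha : 0 ≤ a) (hab : a ≤ b) (hb : b ≤ a + 1) :
    psi (2 + b) - psi (2 + a) ≤ (b - a) * (2 / 3) := by
  let H : ℕ → ℝ := fun n => (psi (2 + n + b) - psi (2 + n + a)) - (b - a) * (1 / (2 + n - 1/2))
  have hm : Monotone H := by
    apply monotone_nat_of_le_succ
    intro n
    simp only [H]
    have hn : (0:ℝ) ≤ n := Nat.cast_nonneg n
    have h := F_step ha (ha.trans hab) (show (0:ℝ) < 2 + n by linarith)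
    rw [h]
    push_cast
    rw [show (2:ℝ) + (n + 1) = 2 + n + 1 by ring]
    have h3 : (b - a) / ((2 + n + a) * (2 + n + b)) ≤
        (b - a) * (1 / (2 + n - 1/2) - 1 / (2 + n + 1 - 1/2)) := by
      rw [div_eq_mul_one_div]
      apply mul_le_mul_of_nonneg_left _ (by linarith)
      have e1 : (1:ℝ) / (2 + n - 1/2) - 1 / (2 + n + 1 - 1/2) = 1 / ((2 + n)^2 - 1/4) := by
        have q1 : (2 + n - 1/2:ℝ) ≠ 0 := by linarith
        have q2 : (2 + n + 1 - 1/2:ℝ) ≠ 0 := by linarith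
        rw [show ((2 + n)^2 - 1/4:ℝ) = (2 + n - 1/2) * (2 + n + 1 - 1/2) by ring,
          div_sub_div _ _ q1 q2]
        congr 1
        ring
      rw [e1]
      apply one_div_le_one_div_of_le
      · nlinarith
      · nlinarith [mul_nonneg ha (ha.trans hab), mul_nonneg ha hn, mul_nonneg (ha.trans hab) hn]
    linarith
  have ht : Tendsto H atTop (𝓝 0) := by
    have h1 := tendsto_diff ha hab hb (show (0:ℝ) < 2 by norm_num)
    have h0 : Tendsto (fun n : ℕ => 1 / (2 + (n:ℝ) - 1/2)) atTop (𝓝 0) := by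
      have : Tendsto (fun n : ℕ => 2 + (n:ℝ) - 1/2) atTop atTop := by
        have := tendsto_atTop_add_const_left atTop (2 - 1/2 : ℝ)
          (tendsto_natCast_atTop_atTop (R := ℝ))
        refine this.congr (fun n => by ring)
      simpa [Function.comp_def] using tendsto_inv_atTop_zero.comp this
    have := h1.sub (h0.const_mul (b - a))
    simpa [H] using this
  have := hm.ge_of_tendsto ht 0
  simp only [H] at this
  norm_num at this
  linarith

lemma F_lower {s : ℝ} (hs : 0 ≤ s) (hs1 : s ≤ 1) :
    s / 2 ≤ psi (2 + s) - psi 2 := by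
  let H : ℕ → ℝ := fun n => (psi (2 + n + s) - psi (2 + n + 0)) - s * (1 / (2 + n))
  have hm : Antitone H := by
    apply antitone_nat_of_succ_le
    intro n
    simp only [H]
    have hn : (0:ℝ) ≤ n := Nat.cast_nonneg n
    have h := F_step le_rfl hs (show (0:ℝ) < 2 + n by linarith)
    rw [h]
    push_cast
    rw [show (2:ℝ) + (n + 1) = 2 + n + 1 by ring]
    have h3 : s * (1 / (2 + n) - 1 / (2 + n + 1)) ≤ (s - 0) / ((2 + n + 0) * (2 + n + s)) := by
      rw [div_eq_mul_one_div (s - 0), sub_zero]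
      apply mul_le_mul_of_nonneg_left _ hs
      have e1 : (1:ℝ) / (2 + n) - 1 / (2 + n + 1) = 1 / ((2 + n) * (2 + n + 1)) := by
        have : (2 + n:ℝ) ≠ 0 := by linarith
        have : (2 + n + 1:ℝ) ≠ 0 := by linarith
        field_simp
        ring
      rw [e1]
      apply one_div_le_one_div_of_le
      · positivity
      · nlinarith
    linarith
  have ht : Tendsto H atTop (𝓝 0) := by
    have h1 := tendsto_diff le_rfl hs (by linarith) (show (0:ℝ) < 2 by norm_num)
    have h0 : Tendsto (fun n : ℕ => 1 / (2 + (n:ℝ))) atTop (𝓝 0) := by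
      have := tendsto_atTop_add_const_left atTop (2 : ℝ)
          (tendsto_natCast_atTop_atTop (R := ℝ))
      simpa [Function.comp_def] using tendsto_inv_atTop_zero.comp this
    have := h1.sub (h0.const_mul s)
    simpa [H] using this
  have := hm.le_of_tendsto ht 0
  simp only [H] at this
  norm_num at this
  linarith

lemma psi_diff {a b : ℝ} (ha : 0 ≤ a) (hab : a ≤ b) (hb : b ≤ a + 1) :
    psi (1 + b) - psi (1 + a) ≤ (b - a) * (1 / ((1 + a) * (1 + b)) + 2 / 3) := by
  have h := F_step ha (ha.trans hab) one_pos
  have h2 := F_upper ha hab hb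
  rw [h, show (1:ℝ) + 1 = 2 by norm_num, div_eq_mul_one_div]
  linarith

lemma gamma_lt : Real.eulerMascheroniConstant < 3 / 5 := by
  have h := Real.eulerMascheroniConstant_lt_eulerMascheroniSeq' 32
  have h2 : Real.eulerMascheroniSeq' 32 = (harmonic 32 : ℝ) - Real.log 32 := by
    simp [Real.eulerMascheroniSeq']
  have h3 : Real.log 32 = 5 * Real.log 2 := by
    rw [show (32:ℝ) = 2 ^ 5 by norm_num, Real.log_pow]; norm_num
  have h4 : (harmonic 32 : ℝ) < 4.06 := by
    have : harmonic 32 < 4.06 := by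
      simp only [harmonic, Finset.sum_range_succ]; norm_num
    exact_mod_cast (Rat.cast_lt (K := ℝ)).2 this |>.trans_eq (by norm_num)
  have := Real.log_two_gt_d9
  linarith

lemma psi_ge {y : ℝ} (hy : 1 ≤ y) : -(3/5) ≤ psi y := by
  have := psi_mono one_pos hy
  rw [psi_one] at this
  linarith [gamma_lt]

lemma psi_lower {s : ℝ} (hs : 0 ≤ s) (hs1 : s ≤ 1) :
    -(3/5) + s / (1 + s) + s / 2 ≤ psi (1 + s) := by
  have h := F_step le_rfl hs one_pos
  have h2 := F_lower hs hs1
  norm_num [psi_one] at h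
  linarith [gamma_lt]

lemma psi_upper {s : ℝ} (hs : 0 ≤ s) (hs1 : s ≤ 1) :
    psi (1 + s) ≤ -(1/2) + s / (1 + s) + s * (2 / 3) := by
  have h := psi_diff le_rfl hs (by linarith)
  norm_num [psi_one] at h
  have := Real.one_half_lt_eulerMascheroniConstant
  rw [div_eq_mul_inv s]
  linarith

/-- the terms -/
noncomputable def g (L s : ℝ) : ℝ := Real.exp (-(L * s) - lg (1 + s))

noncomputable def p (L s : ℝ) : ℝ := L + psi (1 + s)

/-- minus the derivative of `ρ ↦ g L (k * ρ)` -/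
noncomputable def a (L k ρ : ℝ) : ℝ := k * p L (k * ρ) * g L (k * ρ)

lemma g_pos (L s : ℝ) : 0 < g L s := Real.exp_pos _

lemma exp_le_of {z c : ℝ} (hc : 0 < c) (h : z ≤ 1 - 1 / c) : Real.exp z ≤ c := by
  have h1 := Real.add_one_le_exp (-z)
  have h2 : 1 / c ≤ Real.exp (-z) := by linarith
  rw [Real.exp_neg, ← one_div] at h2
  exact (one_div_le_one_div hc (Real.exp_pos z)).1 h2

lemma g_step (L k ρ : ℝ) : g L ((k + 1) * ρ) =
    g L (k * ρ) * (Real.exp (-(L * ρ)) *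
      Real.exp (-(lg (1 + (k + 1) * ρ) - lg (1 + k * ρ)))) := by
  unfold g
  rw [← Real.exp_add, ← Real.exp_add]
  congr 1
  ring

lemma lg_lo {k ρ : ℝ} (hk : 0 ≤ k) (hρ : 0 ≤ ρ) :
    ρ * psi (1 + k * ρ) ≤ lg (1 + (k + 1) * ρ) - lg (1 + k * ρ) := by
  have := mul_nonneg hk hρ
  have h := tangent_le (show 0 < 1 + k * ρ by linarith)
    (show 1 + k * ρ ≤ 1 + (k + 1) * ρ by linarith)
  rwa [show 1 + (k + 1) * ρ - (1 + k * ρ) = ρ by ring] at h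

lemma lg_hi {k ρ : ℝ} (hk : 0 ≤ k) (hρ : 0 ≤ ρ) :
    lg (1 + (k + 1) * ρ) - lg (1 + k * ρ) ≤ ρ * psi (1 + (k + 1) * ρ) := by
  have := mul_nonneg hk hρ
  have h := le_tangent (show 0 < 1 + k * ρ by linarith)
    (show 1 + k * ρ ≤ 1 + (k + 1) * ρ by linarith)
  rwa [show 1 + (k + 1) * ρ - (1 + k * ρ) = ρ by ring] at h

lemma p_ge {L s : ℝ} (hL : 7/2 ≤ L) (hs : 0 ≤ s) : 29/10 ≤ p L s := by
  have := psi_ge (show 1 ≤ 1 + s by linarith)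
  unfold p; linarith

lemma p_diff {L k ρ : ℝ} (hk : 0 ≤ k) (hρ : 0 ≤ ρ) (hρ1 : ρ ≤ 1) :
    p L ((k + 1) * ρ) - p L (k * ρ) ≤
      ρ * (1 / ((1 + k * ρ) * (1 + (k + 1) * ρ)) + 2 / 3) := by
  have h0 := mul_nonneg hk hρ
  have h := psi_diff h0 (show k * ρ ≤ (k + 1) * ρ by linarith)
    (show (k + 1) * ρ ≤ k * ρ + 1 by linarith)
  rw [show (k + 1) * ρ - k * ρ = ρ by ring] at h
  unfold p; linarith

lemma a_anti {L k ρ : ℝ} (hL : 7/2 ≤ L) (hρ : 0 < ρ) (hρ1 : ρ ≤ 1)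
    (hx : Real.exp (-(L * ρ)) ≤ 1/2) (hk : 3 ≤ k) : a L (k + 1) ρ ≤ a L k ρ := by
  have hk0 : 0 ≤ k := by linarith
  have h0 := mul_nonneg hk0 hρ.le
  have hp := p_ge hL h0
  have hpd : p L ((k + 1) * ρ) ≤ p L (k * ρ) * (1 + 0.575 * ρ) := by
    have h1 := p_diff (L := L) hk0 hρ.le hρ1
    have h2 : 1 / ((1 + k * ρ) * (1 + (k + 1) * ρ)) ≤ 1 := by
      rw [div_le_one (by positivity)]
      nlinarith
    nlinarith
  have hl := lg_lo hk0 hρ.le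
  have hps := psi_ge (show 1 ≤ 1 + k * ρ by linarith)
  have he : Real.exp (-(lg (1 + (k + 1) * ρ) - lg (1 + k * ρ))) ≤ Real.exp (0.6 * ρ) := by
    apply Real.exp_le_exp.2
    nlinarith
  set e := Real.exp (-(L * ρ)) * Real.exp (-(lg (1 + (k + 1) * ρ) - lg (1 + k * ρ))) with hedef
  have he0 : 0 < e := by positivity
  have key : e * (1 + 0.575 * ρ) ≤ 3/4 := by
    rcases le_total ρ (1/4) with h | h
    · have h1 : Real.exp (0.6 * ρ) ≤ 1.18 := exp_le_of (by norm_num) (by norm_num; linarith)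
      have h2 : e ≤ 1/2 * 1.18 :=
        mul_le_mul hx (he.trans h1) (Real.exp_pos _).le (by norm_num)
      nlinarith
    · have h1 : Real.exp (-(L * ρ)) ≤ Real.exp (-(3.5 * ρ)) := by
        apply Real.exp_le_exp.2
        nlinarith
      have h2 : e ≤ Real.exp (-(3.5 * ρ)) * Real.exp (0.6 * ρ) :=
        mul_le_mul h1 he (Real.exp_pos _).le (Real.exp_pos _).le
      have h3 : 1 + 0.575 * ρ ≤ Real.exp (0.575 * ρ) := by
        linarith [Real.add_one_le_exp (0.575 * ρ)]
      have h4 : e * (1 + 0.575 * ρ) ≤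
          Real.exp (-(3.5 * ρ)) * Real.exp (0.6 * ρ) * Real.exp (0.575 * ρ) :=
        mul_le_mul h2 h3 (by positivity) (by positivity)
      rw [← Real.exp_add, ← Real.exp_add] at h4
      refine h4.trans (exp_le_of (by norm_num) ?_)
      norm_num; linarith
  unfold a
  rw [g_step, ← hedef]
  have hg := g_pos L (k * ρ)
  calc (k + 1) * p L ((k + 1) * ρ) * (g L (k * ρ) * e)
      ≤ (4/3 * k) * (p L (k * ρ) * (1 + 0.575 * ρ)) * (g L (k * ρ) * e) := by
        apply mul_le_mul_of_nonneg_right _ (by positivity)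
        apply mul_le_mul (by linarith) hpd _ (by positivity)
        exact le_trans (by norm_num) (p_ge hL (by positivity))
    _ = (k * p L (k * ρ) * g L (k * ρ)) * (4/3 * (e * (1 + 0.575 * ρ))) := by ring
    _ ≤ (k * p L (k * ρ) * g L (k * ρ)) * 1 := by
        apply mul_le_mul_of_nonneg_left (by linarith) (by positivity)
    _ = _ := by ring

lemma a_pos {L k ρ : ℝ} (hL : 7/2 ≤ L) (hρ : 0 < ρ) (hk : 0 < k) : 0 < a L k ρ := by
  have hp := p_ge hL (mul_pos hk hρ).le
  have := g_pos L (k * ρ)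
  unfold a
  positivity

/-- large `ρ`: the second term is smaller than the first -/
lemma a_two_lt {L ρ : ℝ} (hL : 7/2 ≤ L) (hρ : 1/4 ≤ ρ) (hρ1 : ρ ≤ 1) :
    a L (1 + 1) ρ < a L 1 ρ := by
  have hρ0 : 0 < ρ := by linarith
  have hps : -(0.275) ≤ psi (1 + 1 * ρ) := by
    have h1 := psi_lower (show (0:ℝ) ≤ 1/4 by norm_num) (by norm_num)
    have h2 := psi_mono (show (0:ℝ) < 1 + 1/4 by norm_num) (show 1 + 1/4 ≤ 1 + 1 * ρ by linarith)
    norm_num at h1 h2 ⊢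
    linarith
  have hp : 3.225 ≤ p L (1 * ρ) := by
    unfold p; norm_num at hps ⊢; linarith
  have hpd : p L ((1 + 1) * ρ) ≤ p L (1 * ρ) * (1 + 0.373 * ρ) := by
    have h1 := p_diff (L := L) zero_le_one hρ0.le hρ1
    have h2 : 1 / ((1 + 1 * ρ) * (1 + (1 + 1) * ρ)) ≤ 8/15 := by
      rw [div_le_iff₀ (by positivity)]
      nlinarith
    have h3 : ρ * (1 / ((1 + 1 * ρ) * (1 + (1 + 1) * ρ)) + 2 / 3) ≤ ρ * 1.2 :=
      mul_le_mul_of_nonneg_left (by linarith) hρ0.le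
    have h4 : 3.225 * (0.373 * ρ) ≤ p L (1 * ρ) * (0.373 * ρ) :=
      mul_le_mul_of_nonneg_right hp (by positivity)
    linarith
  have hl := lg_lo zero_le_one hρ0.le
  have he : Real.exp (-(lg (1 + (1 + 1) * ρ) - lg (1 + 1 * ρ))) ≤ Real.exp (0.275 * ρ) := by
    apply Real.exp_le_exp.2
    have h3 := (mul_le_mul_of_nonneg_left hps hρ0.le).trans hl
    generalize lg (1 + (1 + 1) * ρ) - lg (1 + 1 * ρ) = d at *
    linarith
  set e := Real.exp (-(L * ρ)) * Real.exp (-(lg (1 + (1 + 1) * ρ) - lg (1 + 1 * ρ))) with hedef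
  have he0 : 0 < e := by positivity
  have key : e * (1 + 0.373 * ρ) < 1/2 := by
    have h1 : Real.exp (-(L * ρ)) ≤ Real.exp (-(3.5 * ρ)) := by
      apply Real.exp_le_exp.2
      nlinarith
    have h2 : e ≤ Real.exp (-(3.5 * ρ)) * Real.exp (0.275 * ρ) :=
      mul_le_mul h1 he (Real.exp_pos _).le (Real.exp_pos _).le
    have h3 : 1 + 0.373 * ρ ≤ Real.exp (0.373 * ρ) := by
      linarith [Real.add_one_le_exp (0.373 * ρ)]
    have h4 : e * (1 + 0.373 * ρ) ≤
        Real.exp (-(3.5 * ρ)) * Real.exp (0.275 * ρ) * Real.exp (0.373 * ρ) :=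
      mul_le_mul h2 h3 (by positivity) (by positivity)
    rw [← Real.exp_add, ← Real.exp_add] at h4
    refine h4.trans_lt ?_
    rw [← Real.lt_log_iff_exp_lt (by norm_num), one_div, Real.log_inv]
    have := Real.log_two_lt_d9
    linarith
  unfold a
  rw [g_step, ← hedef]
  have hg := g_pos L (1 * ρ)
  have hp0 : 0 < p L (1 * ρ) := lt_of_lt_of_le (by norm_num) hp
  calc (1 + 1) * p L ((1 + 1) * ρ) * (g L (1 * ρ) * e)
      ≤ (1 + 1) * (p L (1 * ρ) * (1 + 0.373 * ρ)) * (g L (1 * ρ) * e) := by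
        apply mul_le_mul_of_nonneg_right _ (by positivity)
        apply mul_le_mul_of_nonneg_left hpd (by norm_num)
    _ = (p L (1 * ρ) * g L (1 * ρ)) * (2 * (e * (1 + 0.373 * ρ))) := by ring
    _ < (p L (1 * ρ) * g L (1 * ρ)) * 1 := by
        apply mul_lt_mul_of_pos_left (by linarith) (by positivity)
    _ = _ := by ring

lemma four_small {L ρ : ℝ} (hL : 7/2 ≤ L) (hρ : 0 < ρ) (hρ1 : ρ ≤ 1/4)
    (hx : Real.exp (-(L * ρ)) ≤ 1/2) :
    0 < a L 1 ρ - a L (1 + 1) ρ + a L (1 + 1 + 1) ρ - a L (1 + 1 + 1 + 1) ρ := by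
  set x := Real.exp (-(L * ρ)) with hxdef
  have hx0 : 0 < x := Real.exp_pos _
  -- first ratio
  have hps1 : -(3/5) + 1.3 * ρ ≤ psi (1 + 1 * ρ) := by
    have h1 := psi_lower hρ.le (by linarith)
    have h2 : 0.8 * ρ ≤ ρ / (1 + ρ) := by
      rw [le_div_iff₀ (by linarith)]
      nlinarith
    rw [one_mul]
    linarith
  have hp1 : 2.9 ≤ p L (1 * ρ) := le_trans (by norm_num) (p_ge hL (by linarith))
  have hp2 : p L ((1 + 1) * ρ) ≤ 1.1035 * p L (1 * ρ) := by
    have h1 := p_diff (L := L) zero_le_one hρ.le (by linarith)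
    have h2 : ρ * (1 / ((1 + 1 * ρ) * (1 + (1 + 1) * ρ))) ≤ 2/15 := by
      rw [mul_one_div, div_le_iff₀ (by positivity)]
      nlinarith
    linarith
  have he1 : Real.exp (-(lg (1 + (1 + 1) * ρ) - lg (1 + 1 * ρ))) ≤ 1.0746 := by
    have hl := lg_lo zero_le_one hρ.le
    have h3 : ρ * (-(3/5) + 1.3 * ρ) ≤ ρ * psi (1 + 1 * ρ) :=
      mul_le_mul_of_nonneg_left hps1 hρ.le
    apply exp_le_of (by norm_num)
    norm_num at hl h3 ⊢
    nlinarith [sq_nonneg (ρ - 3/13)]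
  -- second ratio
  have hp3 : p L ((1 + 1) * ρ) ≤ p L ((1 + 1 + 1) * ρ) := by
    unfold p
    have := psi_mono (show 0 < 1 + (1 + 1) * ρ by linarith)
      (show 1 + (1 + 1) * ρ ≤ 1 + (1 + 1 + 1) * ρ by linarith)
    linarith
  have he2 : 0.892 ≤ Real.exp (-(lg (1 + (1 + 1 + 1) * ρ) - lg (1 + (1 + 1) * ρ))) := by
    have hl := lg_hi (show (0:ℝ) ≤ 1 + 1 by norm_num) hρ.le
    have h1 := psi_upper (show 0 ≤ (1 + 1 + 1) * ρ by linarith) (by linarith)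
    have h2 : (1 + 1 + 1) * ρ / (1 + (1 + 1 + 1) * ρ) ≤ 3/7 := by
      rw [div_le_iff₀ (by linarith)]
      linarith
    have h3 : psi (1 + (1 + 1 + 1) * ρ) ≤ 3/7 := by linarith
    have h4 : ρ * psi (1 + (1 + 1 + 1) * ρ) ≤ ρ * (3/7) := mul_le_mul_of_nonneg_left h3 hρ.le
    have := Real.add_one_le_exp (-(lg (1 + (1 + 1 + 1) * ρ) - lg (1 + (1 + 1) * ρ)))
    have h5 := hl.trans h4
    refine le_trans ?_ this
    generalize lg (1 + (1 + 1 + 1) * ρ) - lg (1 + (1 + 1) * ρ) = d at *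
    linarith
  -- third ratio
  have hp3' : 2.9 ≤ p L ((1 + 1 + 1) * ρ) := le_trans (by norm_num) (p_ge hL (by linarith))
  have hp4 : p L ((1 + 1 + 1 + 1) * ρ) ≤ 1.0822 * p L ((1 + 1 + 1) * ρ) := by
    have h1 := p_diff (L := L) (show (0:ℝ) ≤ 1 + 1 + 1 by norm_num) hρ.le (by linarith)
    have h2 : ρ * (1 / ((1 + (1 + 1 + 1) * ρ) * (1 + (1 + 1 + 1 + 1) * ρ))) ≤ 1/14 := by
      rw [mul_one_div, div_le_iff₀ (by positivity)]
      nlinarith [mul_nonneg (show 0 ≤ 1 - 3 * ρ by linarith) (show 0 ≤ 1 - 4 * ρ by linarith)]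
    linarith
  have he3 : Real.exp (-(lg (1 + (1 + 1 + 1 + 1) * ρ) - lg (1 + (1 + 1 + 1) * ρ))) ≤ 1.031 := by
    have hl := lg_lo (show (0:ℝ) ≤ 1 + 1 + 1 by norm_num) hρ.le
    have h1 := psi_lower (show 0 ≤ (1 + 1 + 1) * ρ by linarith) (by linarith)
    have h2 : (1 + 1 + 1) * ρ / 2 ≤ (1 + 1 + 1) * ρ / (1 + (1 + 1 + 1) * ρ) :=
      div_le_div_of_nonneg_left (by linarith) (by linarith) (by linarith)
    have h3 : ρ * (-(3/5) + 3 * ρ) ≤ ρ * psi (1 + (1 + 1 + 1) * ρ) :=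
      mul_le_mul_of_nonneg_left (by linarith) hρ.le
    apply exp_le_of (by norm_num)
    norm_num at hl h3 ⊢
    nlinarith [sq_nonneg (ρ - 1/10)]
  unfold a
  rw [g_step L (1 + 1 + 1), g_step L (1 + 1), g_step L 1, ← hxdef]
  set e1 := Real.exp (-(lg (1 + (1 + 1) * ρ) - lg (1 + 1 * ρ)))
  set e2 := Real.exp (-(lg (1 + (1 + 1 + 1) * ρ) - lg (1 + (1 + 1) * ρ)))
  set e3 := Real.exp (-(lg (1 + (1 + 1 + 1 + 1) * ρ) - lg (1 + (1 + 1 + 1) * ρ)))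
  have h10 : 0 < e1 := Real.exp_pos _
  have h20 : 0 < e2 := Real.exp_pos _
  have h30 : 0 < e3 := Real.exp_pos _
  set p1 := p L (1 * ρ)
  set p2 := p L ((1 + 1) * ρ)
  set p3 := p L ((1 + 1 + 1) * ρ)
  set p4 := p L ((1 + 1 + 1 + 1) * ρ)
  have hg := g_pos L (1 * ρ)
  set g1 := g L (1 * ρ)
  have hp20 : 0 < p2 := lt_of_lt_of_le (by norm_num) (p_ge hL (show 0 ≤ (1 + 1) * ρ by linarith))
  have hp30 : 0 < p3 := by linarith
  have hp10 : 0 < p1 := by linarith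
  have b1 : p4 * e3 ≤ 1.1158 * p3 := by
    have := mul_le_mul hp4 he3 h30.le (by positivity)
    linarith
  have b2 : 0.892 * p2 ≤ p3 * e2 := by
    have := mul_le_mul hp3 he2 (by norm_num) hp30.le
    linarith
  have b3 : p2 * e1 ≤ 1.186 * p1 := by
    have := mul_le_mul hp2 he1 h10.le (by positivity)
    linarith
  have c1 : 0.892 * p2 * (x * (3 - 4.4632 * x)) ≤ x * e2 * (3 * p3 - 4 * x * (p4 * e3)) := by
    have hxx : 0 ≤ x * (3 - 4.4632 * x) := by
      apply mul_nonneg hx0.le; linarith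
    have := mul_le_mul_of_nonneg_right b2 hxx
    have h2 := mul_le_mul_of_nonneg_left b1 (show 0 ≤ 4 * x * (x * e2) by positivity)
    linarith
  have c2 : 0 < p1 - x * e1 * (2 * p2 - 0.892 * p2 * (x * (3 - 4.4632 * x))) := by
    have hq : 0 ≤ x * (2 - 0.892 * (x * (3 - 4.4632 * x))) := by
      apply mul_nonneg hx0.le; nlinarith
    have h1 := mul_le_mul_of_nonneg_right b3 hq
    have h2 : 1.186 * (x * (2 - 0.892 * (x * (3 - 4.4632 * x)))) < 0.99 := by
      nlinarith [mul_nonneg hx0.le (show 0 ≤ 1/2 - x by linarith),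
        mul_nonneg (mul_nonneg hx0.le hx0.le) (show 0 ≤ 1/2 - x by linarith)]
    have h3 := mul_lt_mul_of_pos_left h2 hp10
    linarith
  have c3 := mul_le_mul_of_nonneg_left c1 (show 0 ≤ x * e1 by positivity)
  have c4 : 0 < p1 - x * e1 * (2 * p2) + x * e1 * (x * e2 * (3 * p3 - 4 * x * (p4 * e3))) := by
    linarith
  have c5 := mul_pos hg c4
  refine c5.trans_eq ?_
  ring

lemma four_pos {L ρ : ℝ} (hL : 7/2 ≤ L) (hρ : 0 < ρ) (hρ1 : ρ ≤ 1)
    (hx : Real.exp (-(L * ρ)) ≤ 1/2) :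
    0 < a L 1 ρ - a L 2 ρ + a L 3 ρ - a L 4 ρ := by
  rw [show (2:ℝ) = 1 + 1 by norm_num, show (3:ℝ) = 1 + 1 + 1 by norm_num,
    show (4:ℝ) = 1 + 1 + 1 + 1 by norm_num]
  rcases le_total ρ (1/4) with h | h
  · exact four_small hL hρ h hx
  · have h1 := a_two_lt hL h hρ1
    have h2 := a_anti hL hρ hρ1 hx (show (3:ℝ) ≤ 1 + 1 + 1 by norm_num)
    linarith

lemma g_hasDeriv {L k ρ : ℝ} (hk : 0 ≤ k) (hρ : 0 < ρ) :
    HasDerivAt (fun r => g L (k * r)) (-(a L k ρ)) ρ := by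
  have h0 := mul_nonneg hk hρ.le
  have h1 : HasDerivAt (fun r : ℝ => k * r) k ρ := by
    simpa using (hasDerivAt_id ρ).const_mul k
  have h2 : HasDerivAt (fun r : ℝ => 1 + k * r) k ρ := h1.const_add 1
  have h3 := (lg_hasDeriv (show 0 < 1 + k * ρ by linarith)).comp ρ h2
  have h4 := ((h1.const_mul L).neg.sub h3).exp
  refine h4.congr_deriv ?_
  simp only [a, p, g, Pi.neg_apply, Pi.sub_apply, Function.comp]
  ring

lemma x_le {L ρ₁ ρ : ℝ} (hL : 7/2 ≤ L) (h : ρ₁ ≤ ρ)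
    (hx : Real.exp (-(L * ρ₁)) ≤ 1/2) : Real.exp (-(L * ρ)) ≤ 1/2 := by
  refine le_trans (Real.exp_le_exp.2 ?_) hx
  nlinarith

lemma pair_anti {L ρ₁ ρ₂ k : ℝ} (hL : 7/2 ≤ L) (h1 : 0 < ρ₁) (h12 : ρ₁ ≤ ρ₂) (h2 : ρ₂ ≤ 1)
    (hx : Real.exp (-(L * ρ₁)) ≤ 1/2) (hk : 3 ≤ k) :
    g L (k * ρ₂) - g L ((k + 1) * ρ₂) ≤ g L (k * ρ₁) - g L ((k + 1) * ρ₁) := by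
  have hd : ∀ r, ρ₁ ≤ r → HasDerivAt (fun r => g L (k * r) - g L ((k + 1) * r))
      (-(a L k r) - -(a L (k + 1) r)) r := fun r hr =>
    (g_hasDeriv (by linarith) (by linarith)).sub (g_hasDeriv (by linarith) (by linarith))
  have := antitoneOn_of_deriv_nonpos (convex_Icc ρ₁ ρ₂)
    (f := fun r => g L (k * r) - g L ((k + 1) * r))
    (fun r hr => (hd r hr.1).continuousAt.continuousWithinAt)
    (fun r hr => by
      rw [interior_Icc] at hr
      exact (hd r hr.1.le).differentiableAt.differentiableWithinAt)
    (fun r hr => by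
      rw [interior_Icc] at hr
      rw [(hd r hr.1.le).deriv]
      have := a_anti hL (h1.trans hr.1) (hr.2.le.trans h2) (x_le hL hr.1.le hx) hk
      linarith)
  exact this (Set.left_mem_Icc.2 h12) (Set.right_mem_Icc.2 h12) h12

lemma four_anti {L ρ₁ ρ₂ : ℝ} (hL : 7/2 ≤ L) (h1 : 0 < ρ₁) (h12 : ρ₁ < ρ₂) (h2 : ρ₂ ≤ 1)
    (hx : Real.exp (-(L * ρ₁)) ≤ 1/2) :
    g L (1 * ρ₂) - g L (2 * ρ₂) + g L (3 * ρ₂) - g L (4 * ρ₂) <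
    g L (1 * ρ₁) - g L (2 * ρ₁) + g L (3 * ρ₁) - g L (4 * ρ₁) := by
  have hd : ∀ r, ρ₁ ≤ r → HasDerivAt
      (fun r => g L (1 * r) - g L (2 * r) + g L (3 * r) - g L (4 * r))
      (-(a L 1 r) - -(a L 2 r) + -(a L 3 r) - -(a L 4 r)) r := fun r hr =>
    (((g_hasDeriv (by norm_num) (by linarith)).sub (g_hasDeriv (by norm_num) (by linarith))).add
      (g_hasDeriv (by norm_num) (by linarith))).sub (g_hasDeriv (by norm_num) (by linarith))
  have := strictAntiOn_of_deriv_neg (convex_Icc ρ₁ ρ₂)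
    (f := fun r => g L (1 * r) - g L (2 * r) + g L (3 * r) - g L (4 * r))
    (fun r hr => (hd r hr.1).continuousAt.continuousWithinAt)
    (fun r hr => by
      rw [interior_Icc] at hr
      rw [(hd r hr.1.le).deriv]
      have := four_pos hL (h1.trans hr.1) (hr.2.le.trans h2) (x_le hL hr.1.le hx)
      linarith)
  exact this (Set.left_mem_Icc.2 h12.le) (Set.right_mem_Icc.2 h12.le) h12

lemma summable_u {L ρ : ℝ} (hL : 7/2 ≤ L) (hρ : 0 < ρ) :
    Summable (fun n : ℕ => (-1:ℝ) ^ n * g L (n * ρ)) := by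
  have hs : Summable (fun n : ℕ => (Real.exp (-(2.9 * ρ))) ^ n) := by
    apply summable_geometric_of_lt_one (Real.exp_pos _).le
    rw [Real.exp_lt_one_iff]
    linarith
  refine Summable.of_norm_bounded hs (fun n => ?_)
  rw [norm_mul, norm_pow, norm_neg, norm_one, one_pow, one_mul, Real.norm_eq_abs,
    abs_of_pos (g_pos _ _), ← Real.exp_nat_mul]
  unfold g
  apply Real.exp_le_exp.2
  have hn : (0:ℝ) ≤ n * ρ := by positivity
  have h1 := tangent_le one_pos (show (1:ℝ) ≤ 1 + n * ρ by linarith)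
  have h2 : lg 1 = 0 := by simp [lg]
  have h3 := psi_ge (le_refl (1:ℝ))
  rw [h2, add_sub_cancel_left] at h1
  nlinarith

lemma tsum_split {L ρ : ℝ} (hL : 7/2 ≤ L) (hρ : 0 < ρ) :
    Summable (fun j : ℕ => g L ((2 * j + 5) * ρ) - g L ((2 * j + 5 + 1) * ρ)) ∧
    ∑' n : ℕ, (-1:ℝ) ^ n * g L (n * ρ) = g L 0 -
      (g L (1 * ρ) - g L (2 * ρ) + g L (3 * ρ) - g L (4 * ρ)) -
      ∑' j : ℕ, (g L ((2 * j + 5) * ρ) - g L ((2 * j + 5 + 1) * ρ)) := by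
  have hs := summable_u hL hρ
  set u : ℕ → ℝ := fun n : ℕ => (-1:ℝ) ^ n * g L (n * ρ) with hu
  have hs5 : Summable (fun n => u (n + 5)) := (summable_nat_add_iff 5).2 hs
  have he : Summable (fun k => u (2 * k + 5)) :=
    hs5.comp_injective (i := fun k : ℕ => 2 * k) (fun a b h => by simpa using h)
  have ho : Summable (fun k => u (2 * k + 1 + 5)) :=
    hs5.comp_injective (i := fun k : ℕ => 2 * k + 1) (fun a b h => by simpa using h)
  have h1 : ∀ k : ℕ, u (2 * k + 5) = - g L ((2 * k + 5) * ρ) := by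
    intro k
    simp only [hu]
    rw [Odd.neg_one_pow ⟨k + 2, by ring⟩]
    push_cast
    ring
  have h2 : ∀ k : ℕ, u (2 * k + 1 + 5) = g L ((2 * k + 5 + 1) * ρ) := by
    intro k
    simp only [hu]
    rw [Even.neg_one_pow ⟨k + 3, by ring⟩]
    push_cast
    rw [one_mul]
    congr 1
    ring
  have h3 : (fun k : ℕ => -(u (2 * k + 5) + u (2 * k + 1 + 5))) =
      fun j : ℕ => g L ((2 * j + 5) * ρ) - g L ((2 * j + 5 + 1) * ρ) := by
    funext k
    rw [h1, h2]; ring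
  constructor
  · rw [← h3]
    exact (he.add ho).neg
  · rw [← h3, tsum_neg, he.tsum_add ho, ← hs.sum_add_tsum_nat_add 5]
    have := tsum_even_add_odd (f := fun n => u (n + 5)) he ho
    rw [← this]
    simp only [Finset.sum_range_succ, hu]
    norm_num
    ring

lemma ml_eq {t ρ : ℝ} (ht : 0 < t) (hρ : 0 < ρ) :
    mittagLeffler ρ 1 (-(t ^ ρ)) = ∑' n : ℕ, (-1:ℝ) ^ n * g (-Real.log t) (n * ρ) := by
  unfold mittagLeffler
  congr 1
  funext n
  have hn : (0:ℝ) ≤ n * ρ := by positivity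
  have hG := Real.Gamma_pos_of_pos (show 0 < 1 + n * ρ by linarith)
  unfold g lg
  rw [Real.exp_sub, Real.exp_log hG, neg_pow, mul_div_assoc, Real.rpow_def_of_pos ht,
    ← Real.exp_nat_mul, show ρ * n + 1 = 1 + n * ρ by ring]
  congr 3
  ring

end MLaux

theorem mittagLeffler_strictMono (ρ₀ t : ℝ) (hρ₀ : ρ₀ ∈ Set.Ioo (0:ℝ) 1)
    (ht : t ∈ Set.Ioc 0 (min ((2:ℝ) ^ (-1 / ρ₀)) (Real.exp (-(7/2 : ℝ))))) :
    ∀ ρ₁ ρ₂ : ℝ, ρ₀ ≤ ρ₁ → ρ₁ < ρ₂ → ρ₂ ≤ 1 →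
      mittagLeffler ρ₁ 1 (-(t ^ ρ₁)) < mittagLeffler ρ₂ 1 (-(t ^ ρ₂)) := by
  intro ρ₁ ρ₂ h01 h12 h2
  obtain ⟨ht0, htm⟩ := ht
  have hta := htm.trans (min_le_left _ _)
  have htb := htm.trans (min_le_right _ _)
  have hr0 := hρ₀.1
  have h1 : 0 < ρ₁ := hr0.trans_le h01
  have hlog : Real.log t ≤ -(7/2) := (Real.log_le_iff_le_exp ht0).2 htb
  have hL : 7/2 ≤ -Real.log t := by linarith
  have hx0 : Real.exp (-(-Real.log t * ρ₀)) ≤ 1/2 := by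
    have h3 : Real.log t ≤ (-1 / ρ₀) * Real.log 2 := by
      have := Real.log_le_log ht0 hta
      rwa [Real.log_rpow (by norm_num)] at this
    have h4 : Real.log t * ρ₀ ≤ -Real.log 2 := by
      have := mul_le_mul_of_nonneg_right h3 hr0.le
      have e : (-1 / ρ₀) * Real.log 2 * ρ₀ = -Real.log 2 := by
        field_simp
      linarith
    rw [← Real.le_log_iff_exp_le (by norm_num), one_div, Real.log_inv]
    linarith
  have hx := MLaux.x_le hL h01 hx0
  rw [MLaux.ml_eq ht0 h1, MLaux.ml_eq ht0 (h1.trans h12)]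
  obtain ⟨s1, e1⟩ := MLaux.tsum_split hL h1
  obtain ⟨s2, e2⟩ := MLaux.tsum_split hL (h1.trans h12)
  rw [e1, e2]
  have h4 := MLaux.four_anti hL h1 h12 h2 hx
  have hj : ∀ j : ℕ, (3:ℝ) ≤ 2 * (j:ℝ) + 5 := by
    intro j
    have : (0:ℝ) ≤ j := Nat.cast_nonneg j
    linarith
  have h5 := Summable.tsum_le_tsum
    (fun j : ℕ => MLaux.pair_anti hL h1 h12.le h2 hx (hj j)) s2 s1
  linarith
end

section
/- Let ρ0 ∈ (0,1), let t ∈ (0, min(2^{−1/ρ0}, e^{−7/2})], and let ρ ∈ (ρ0, 1). Then the derivative of the function ρ ↦ E_ρ(−t^ρ) at ρ is strictly positive. -/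
open Real Filter Topology

noncomputable def lG (x : ℝ) : ℝ := Real.log (Real.Gamma x)
noncomputable def psi (x : ℝ) : ℝ := deriv lG x

lemma lG_convex : ConvexOn ℝ (Set.Ioi 0) lG := Real.convexOn_log_Gamma

lemma Gamma_diff {x : ℝ} (hx : 0 < x) : DifferentiableAt ℝ Real.Gamma x := by
  apply Real.differentiableAt_Gamma
  intro m
  have : (0:ℝ) ≤ m := Nat.cast_nonneg m
  linarith

lemma lG_hasDeriv {x : ℝ} (hx : 0 < x) : HasDerivAt lG (psi x) x := by
  have : DifferentiableAt ℝ lG x := (Gamma_diff hx).log (Real.Gamma_pos_of_pos hx).ne'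
  exact this.hasDerivAt

lemma Gamma_hasDeriv {x : ℝ} (hx : 0 < x) :
    HasDerivAt Real.Gamma (psi x * Real.Gamma x) x := by
  have h1 := (Gamma_diff hx).hasDerivAt
  have h2 := h1.log (Real.Gamma_pos_of_pos hx).ne'
  have h3 := h2.unique (lG_hasDeriv hx)
  have h4 := (Real.Gamma_pos_of_pos hx).ne'
  rw [← h3, div_mul_cancel₀ _ h4]
  exact h1

lemma psi_mono {x y : ℝ} (hx : 0 < x) (hxy : x ≤ y) : psi x ≤ psi y :=
  lG_convex.monotoneOn_deriv (fun _ hz => (lG_hasDeriv hz).differentiableAt) hx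
    (lt_of_lt_of_le hx hxy) hxy

lemma lG_sub_ge {x y : ℝ} (hx : 0 < x) (hxy : x ≤ y) : psi x * (y - x) ≤ lG y - lG x := by
  rcases hxy.eq_or_lt with h | h
  · subst h; simp
  have := lG_convex.le_slope_of_hasDerivAt hx (hx.trans h) h (lG_hasDeriv hx)
  rw [slope_def_field, le_div_iff₀ (by linarith)] at this
  exact this

lemma lG_sub_le {x y : ℝ} (hx : 0 < x) (hxy : x ≤ y) : lG y - lG x ≤ psi y * (y - x) := by
  rcases hxy.eq_or_lt with h | h
  · subst h; simp
  have := lG_convex.slope_le_of_hasDerivAt hx (hx.trans h) h (lG_hasDeriv (hx.trans h))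
  rw [slope_def_field, div_le_iff₀ (by linarith)] at this
  exact this

lemma psi_add_one {x : ℝ} (hx : 0 < x) : psi (x + 1) = psi x + 1 / x := by
  have h1 : HasDerivAt (fun y => lG (y + 1)) (psi (x + 1)) x :=
    (lG_hasDeriv (by linarith : 0 < x + 1)).comp_add_const x 1
  have h2 : HasDerivAt (fun y => lG y + Real.log y) (psi x + x⁻¹) x :=
    (lG_hasDeriv hx).add (Real.hasDerivAt_log hx.ne')
  have h3 : (fun y => lG (y + 1)) =ᶠ[𝓝 x] (fun y => lG y + Real.log y) := by
    filter_upwards [lt_mem_nhds hx] with y hy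
    simp only [lG]
    rw [Real.Gamma_add_one hy.ne', Real.log_mul hy.ne' (Real.Gamma_pos_of_pos hy).ne']
    ring
  rw [one_div]
  exact h1.unique (h2.congr_of_eventuallyEq h3)

lemma psi_one : psi 1 = -Real.eulerMascheroniConstant := by
  have h := Real.hasDerivAt_Gamma_one.unique (Gamma_hasDeriv one_pos)
  simpa using h.symm

lemma gamma_lt : Real.eulerMascheroniConstant < 0.6 := by
  refine (Real.eulerMascheroniConstant_lt_eulerMascheroniSeq' 32).trans ?_
  have h : Real.log (32:ℝ) = 5 * Real.log 2 := by
    rw [show (32:ℝ) = 2 ^ 5 by norm_num, Real.log_pow]; norm_num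
  have h2 := Real.log_two_gt_d9
  simp only [Real.eulerMascheroniSeq']
  norm_num [harmonic, Finset.sum_range_succ]
  rw [h]
  norm_num at h2 ⊢
  linarith

lemma tendsto_aux (x a c : ℝ) : Tendsto (fun n : ℕ => c / (x + n + a)) atTop (𝓝 0) := by
  apply Tendsto.div_atTop tendsto_const_nhds
  have h : Tendsto (fun n : ℕ => (n:ℝ) + (x + a)) atTop atTop :=
    tendsto_atTop_add_const_right _ _ tendsto_natCast_atTop_atTop
  refine h.congr (fun n => by ring)

lemma psi_diff_le {x d : ℝ} (hx : 1 ≤ x) (hd : 0 ≤ d) (hd1 : d ≤ 1) :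
    psi (x + d) - psi x ≤ 2 * d / (2 * x + d - 1) := by
  have hx0 : 0 < x := by linarith
  let φ : ℕ → ℝ := fun n => psi (x + n + d) - psi (x + n) - 2 * d / (2 * (x + n) + d - 1)
  have hmono : Monotone φ := by
    apply monotone_nat_of_le_succ
    intro n
    have hn : (0:ℝ) ≤ n := Nat.cast_nonneg n
    simp only [φ]
    push_cast
    obtain ⟨z, hz⟩ : ∃ z, z = x + n := ⟨_, rfl⟩
    have hz1 : 1 ≤ z := by linarith
    rw [show x + (n + 1 : ℝ) + d = (z + d) + 1 by rw [hz]; ring,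
      show x + (n + 1 : ℝ) = z + 1 by rw [hz]; ring, ← hz,
      psi_add_one (by linarith), psi_add_one (by linarith)]
    rcases hd.eq_or_lt with h | h
    · subst h; simp
    have key : 1 / z - 1 / (z + d) ≤ 2 * d / (2 * z + d - 1) - 2 * d / (2 * (z + 1) + d - 1) := by
      rw [div_sub_div _ _ (by linarith) (by linarith), div_sub_div _ _ (by linarith) (by linarith)]
      rw [div_le_div_iff₀ (by positivity) (mul_pos (by linarith) (by linarith))]
      have : 0 ≤ d * (1 - d ^ 2) := mul_nonneg hd (by nlinarith)
      nlinarith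
    linarith
  have hle : ∀ n, φ n ≤ 1 / (x + n + 0) := by
    intro n
    have hn : (0:ℝ) ≤ n := Nat.cast_nonneg n
    have h1 : psi (x + n + d) ≤ psi (x + n + 1) := psi_mono (by linarith) (by linarith)
    rw [psi_add_one (by linarith)] at h1
    have h2 : 0 ≤ 2 * d / (2 * (x + n) + d - 1) := div_nonneg (by linarith) (by linarith)
    simp only [φ, add_zero]
    linarith
  have h0 : φ 0 ≤ 0 := ge_of_tendsto' (tendsto_aux x 0 1)
    (fun n => (hmono (Nat.zero_le n)).trans (hle n))
  simp only [φ, Nat.cast_zero, add_zero] at h0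
  linarith

lemma psi_diff_ge {x d : ℝ} (hx : 1 ≤ x) (hd : 0 ≤ d) :
    2 * d / (2 * x + d - 3 / 4) ≤ psi (x + d) - psi x := by
  have hx0 : 0 < x := by linarith
  let φ : ℕ → ℝ := fun n => 2 * d / (2 * (x + n) + d - 3 / 4) - (psi (x + n + d) - psi (x + n))
  have hmono : Monotone φ := by
    apply monotone_nat_of_le_succ
    intro n
    have hn : (0:ℝ) ≤ n := Nat.cast_nonneg n
    simp only [φ]
    push_cast
    obtain ⟨z, hz⟩ : ∃ z, z = x + n := ⟨_, rfl⟩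
    have hz1 : 1 ≤ z := by linarith
    rw [show x + (n + 1 : ℝ) + d = (z + d) + 1 by rw [hz]; ring,
      show x + (n + 1 : ℝ) = z + 1 by rw [hz]; ring, ← hz,
      psi_add_one (by linarith), psi_add_one (by linarith)]
    have key : 2 * d / (2 * z + d - 3 / 4) - 2 * d / (2 * (z + 1) + d - 3 / 4)
        ≤ 1 / z - 1 / (z + d) := by
      rw [div_sub_div _ _ (by linarith) (by linarith), div_sub_div _ _ (by linarith) (by linarith)]
      rw [div_le_div_iff₀ (mul_pos (by linarith) (by linarith)) (by positivity)]
      have : 0 ≤ d * ((2 * z + d) / 2 + d ^ 2 - 15 / 16) := mul_nonneg hd (by nlinarith)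
      nlinarith
    linarith
  have hle : ∀ n, φ n ≤ d / (x + n + (d / 2 - 3 / 8)) := by
    intro n
    have hn : (0:ℝ) ≤ n := Nat.cast_nonneg n
    have h1 : psi (x + n) ≤ psi (x + n + d) := psi_mono (by linarith) (by linarith)
    have h2 : 2 * d / (2 * (x + n) + d - 3 / 4) = d / (x + n + (d / 2 - 3 / 8)) := by
      rw [div_eq_div_iff (by linarith) (by linarith)]; ring
    simp only [φ]
    linarith
  have h0 : φ 0 ≤ 0 := ge_of_tendsto' (tendsto_aux x _ d)
    (fun n => (hmono (Nat.zero_le n)).trans (hle n))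
  simp only [φ, Nat.cast_zero, add_zero] at h0
  linarith

lemma psi_lower {x : ℝ} (hx : 0 ≤ x) : -0.6 + 2 * x / (x + 5 / 4) ≤ psi (1 + x) := by
  have h := psi_diff_ge (le_refl (1:ℝ)) hx
  rw [psi_one, show (2 * 1 + x - 3 / 4 : ℝ) = x + 5 / 4 by ring] at h
  have := gamma_lt
  linarith

lemma psi_upper {x : ℝ} (hx : 0 ≤ x) (hx1 : x ≤ 1) : psi (1 + x) ≤ -0.5 + 2 * x / (1 + x) := by
  have h := psi_diff_le (le_refl (1:ℝ)) hx hx1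
  rw [psi_one, show (2 * 1 + x - 1 : ℝ) = 1 + x by ring] at h
  have := Real.one_half_lt_eulerMascheroniConstant
  norm_num at this ⊢
  linarith

lemma psi_le_self {x : ℝ} (hx : 0 ≤ x) : psi (1 + x) ≤ 1 + x := by
  have h1 := lG_sub_ge (show 0 < 1 + x by linarith) (show 1 + x ≤ 1 + x + 1 by linarith)
  have h2 : lG (1 + x + 1) = Real.log (1 + x) + lG (1 + x) := by
    simp only [lG]
    rw [Real.Gamma_add_one (by linarith),
      Real.log_mul (by linarith) (Real.Gamma_pos_of_pos (by linarith)).ne']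
  have h3 := Real.log_le_sub_one_of_pos (show 0 < 1 + x by linarith)
  rw [h2] at h1
  linarith

lemma Gamma_ge {x : ℝ} (hx : 0 ≤ x) : 1 / 4 ≤ Real.Gamma (1 + x) := by
  rcases le_total 1 x with h | h
  · have := Real.Gamma_strictMonoOn_Ici.monotoneOn (show (2:ℝ) ∈ Set.Ici 2 by simp)
      (show 1 + x ∈ Set.Ici (2:ℝ) by simp; linarith) (by linarith)
    rw [Real.Gamma_two] at this
    linarith
  · have h1 := lG_sub_ge one_pos (show 1 ≤ 1 + x by linarith)
    rw [psi_one] at h1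
    have h2 : lG 1 = 0 := by simp [lG]
    have h3 := gamma_lt
    have h4 : -0.6 ≤ lG (1 + x) := by nlinarith
    have h5 : Real.Gamma (1 + x) = Real.exp (lG (1 + x)) :=
      (Real.exp_log (Real.Gamma_pos_of_pos (by linarith))).symm
    rw [h5]
    have := Real.add_one_le_exp (lG (1 + x))
    norm_num at h4
    linarith

/-- the weight `(L + ψ(1+x)) / Γ(1+x)` -/
noncomputable def Wf (L x : ℝ) : ℝ := (L + psi (1 + x)) * Real.exp (-lG (1 + x))

/-- logarithmic growth bound of the weight -/
noncomputable def Ef (ρ x : ℝ) : ℝ :=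
  ρ * (0.6 - 2 * x / (x + 5 / 4)) + (2 * ρ / (2 * x + ρ + 1)) / (2.9 + 2 * x / (x + 5 / 4))

lemma Lpsi_ge {L x : ℝ} (hL : 7 / 2 ≤ L) (hx : 0 ≤ x) :
    2.9 + 2 * x / (x + 5 / 4) ≤ L + psi (1 + x) := by
  have := psi_lower hx
  norm_num at this ⊢
  linarith

lemma Lpsi_pos {L x : ℝ} (hL : 7 / 2 ≤ L) (hx : 0 ≤ x) : 0 < L + psi (1 + x) := by
  refine lt_of_lt_of_le ?_ (Lpsi_ge hL hx)
  positivity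

lemma Wf_pos {L x : ℝ} (hL : 7 / 2 ≤ L) (hx : 0 ≤ x) : 0 < Wf L x :=
  mul_pos (Lpsi_pos hL hx) (Real.exp_pos _)

lemma Wf_step {L ρ x : ℝ} (hL : 7 / 2 ≤ L) (hx : 0 ≤ x) (hρ : 0 ≤ ρ) (hρ1 : ρ ≤ 1) :
    Wf L (x + ρ) ≤ Wf L x * Real.exp (Ef ρ x) := by
  have h1 := Lpsi_ge hL hx
  have h0 : 0 < 2.9 + 2 * x / (x + 5 / 4) := by positivity
  have h2 := psi_diff_le (show 1 ≤ 1 + x by linarith) hρ hρ1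
  rw [show 2 * (1 + x) + ρ - 1 = 2 * x + ρ + 1 by ring] at h2
  have h3 := lG_sub_ge (show 0 < 1 + x by linarith) (show 1 + x ≤ 1 + x + ρ by linarith)
  have h4 := psi_lower hx
  have hD : 0 ≤ 2 * ρ / (2 * x + ρ + 1) := by positivity
  unfold Wf Ef
  rw [← add_assoc]
  set D := 2 * ρ / (2 * x + ρ + 1) with hDdef
  set s := 2 * x / (x + 5 / 4) with hs
  have hu : 0 ≤ D / (2.9 + s) := by positivity
  have h5 : L + psi (1 + x + ρ) ≤ (L + psi (1 + x)) * Real.exp (D / (2.9 + s)) := by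
    have h6 : D = (2.9 + s) * (D / (2.9 + s)) := by field_simp
    have h7 := Real.add_one_le_exp (D / (2.9 + s))
    have h8 : (2.9 + s) * (D / (2.9 + s)) ≤ (L + psi (1 + x)) * (D / (2.9 + s)) :=
      mul_le_mul_of_nonneg_right h1 hu
    have h9 := mul_le_mul_of_nonneg_left h7 (Lpsi_pos hL hx).le
    nlinarith
  have h6 : Real.exp (-lG (1 + x + ρ)) ≤ Real.exp (-lG (1 + x)) * Real.exp (ρ * (0.6 - s)) := by
    rw [← Real.exp_add]
    apply Real.exp_le_exp.mpr
    have : (-0.6 + s) * ρ ≤ psi (1 + x) * ρ := mul_le_mul_of_nonneg_right h4 hρ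
    norm_num at this ⊢
    nlinarith
  calc _ ≤ ((L + psi (1 + x)) * Real.exp (D / (2.9 + s))) *
        (Real.exp (-lG (1 + x)) * Real.exp (ρ * (0.6 - s))) :=
        mul_le_mul h5 h6 (Real.exp_pos _).le
          (mul_nonneg (Lpsi_pos hL hx).le (Real.exp_pos _).le)
    _ = _ := by rw [Real.exp_add]; ring

lemma exp_le_aux {y c : ℝ} (n : ℕ) (hn : 0 < n) (hy1 : y < n) (hc : 0 < c)
    (h : 1 ≤ c * (1 - y / n) ^ n) : Real.exp y ≤ c := by
  have hn' : (0:ℝ) < n := Nat.cast_pos.mpr hn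
  have h1 : 1 - y / n ≤ Real.exp (-(y / n)) := by
    have := Real.add_one_le_exp (-(y / n)); linarith
  have h2 : (1 - y / n) ^ n ≤ Real.exp (-y) := by
    calc (1 - y / n) ^ n ≤ Real.exp (-(y / n)) ^ n := by
          apply pow_le_pow_left₀ _ h1
          rw [sub_nonneg, div_le_one hn']; exact hy1.le
      _ = Real.exp (-y) := by
          rw [← Real.exp_nat_mul]; congr 1; field_simp
  have h3 : 1 ≤ c * Real.exp (-y) := h.trans (mul_le_mul_of_nonneg_left h2 hc.le)
  rw [Real.exp_neg, ← div_eq_mul_inv, le_div_iff₀ (Real.exp_pos _)] at h3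
  linarith

lemma Ef_a {ρ x : ℝ} (hρ : 0 < ρ) (hρ1 : ρ ≤ 1) (hx : 3 * ρ ≤ x) : Ef ρ x ≤ 0.3 := by
  unfold Ef
  have hx0 : 0 < x := by linarith
  have h1 : 6 * ρ / (3 * ρ + 5 / 4) ≤ 2 * x / (x + 5 / 4) := by
    rw [div_le_div_iff₀ (by positivity) (by positivity)]; nlinarith
  have h2 : ρ * (0.6 - 6 * ρ / (3 * ρ + 5 / 4)) ≤ 0.05 := by
    have : ρ * (0.6 - 6 * ρ / (3 * ρ + 5 / 4)) = ρ * (0.75 - 4.2 * ρ) / (3 * ρ + 5 / 4) := by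
      field_simp; ring
    rw [this, div_le_iff₀ (by positivity)]
    nlinarith [sq_nonneg (ρ - 0.07)]
  have h3 : 2 * ρ / (2 * x + ρ + 1) ≤ 2 / 7 := by
    rw [div_le_div_iff₀ (by positivity) (by positivity)]; nlinarith
  have h4 : (2 * ρ / (2 * x + ρ + 1)) / (2.9 + 2 * x / (x + 5 / 4)) ≤ 0.1 := by
    have : 0 ≤ 2 * x / (x + 5 / 4) := by positivity
    rw [div_le_iff₀ (by positivity)]
    norm_num
    linarith
  have h5 : ρ * (0.6 - 2 * x / (x + 5 / 4)) ≤ ρ * (0.6 - 6 * ρ / (3 * ρ + 5 / 4)) :=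
    mul_le_mul_of_nonneg_left (by linarith) hρ.le
  norm_num at *
  linarith

lemma Ef_b {ρ : ℝ} (hρ : 0 < ρ) (hρ1 : ρ ≤ 1 / 4) : Ef ρ ρ ≤ 0.1556 := by
  unfold Ef
  have h2 : ρ * (0.6 - 2 * ρ / (ρ + 5 / 4)) ≤ 0.067 := by
    have : ρ * (0.6 - 2 * ρ / (ρ + 5 / 4)) = ρ * (0.75 - 1.4 * ρ) / (ρ + 5 / 4) := by
      field_simp; ring
    rw [this, div_le_iff₀ (by positivity)]
    nlinarith [sq_nonneg (ρ - 0.25)]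
  have h4 : (2 * ρ / (2 * ρ + ρ + 1)) / (2.9 + 2 * ρ / (ρ + 5 / 4)) ≤ 0.0885 := by
    rw [div_le_iff₀ (by positivity), div_le_iff₀ (by positivity)]
    have : 0.0885 * (2.9 + 2 * ρ / (ρ + 5 / 4)) * (2 * ρ + ρ + 1)
      = 0.0885 * (4.9 * ρ + 3.625) * (3 * ρ + 1) / (ρ + 5 / 4) := by
      field_simp; ring
    rw [this, le_div_iff₀ (by positivity)]
    nlinarith
  norm_num at *
  linarith

lemma Ef_c {ρ : ℝ} (hρ : 0 < ρ) (hρ1 : ρ ≤ 1 / 4) : Ef ρ (3 * ρ) ≤ 0.0726 := by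
  unfold Ef
  have h2 : ρ * (0.6 - 2 * (3 * ρ) / (3 * ρ + 5 / 4)) ≤ 0.0226 := by
    have : ρ * (0.6 - 2 * (3 * ρ) / (3 * ρ + 5 / 4)) = ρ * (0.75 - 4.2 * ρ) / (3 * ρ + 5 / 4) := by
      field_simp; ring
    rw [this, div_le_iff₀ (by positivity)]
    nlinarith [sq_nonneg (ρ - 0.08)]
  have h4 : (2 * ρ / (2 * (3 * ρ) + ρ + 1)) / (2.9 + 2 * (3 * ρ) / (3 * ρ + 5 / 4)) ≤ 0.05 := by
    rw [div_le_iff₀ (by positivity), div_le_iff₀ (by positivity)]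
    have : 0.05 * (2.9 + 2 * (3 * ρ) / (3 * ρ + 5 / 4)) * (2 * (3 * ρ) + ρ + 1)
      = 0.05 * (14.7 * ρ + 3.625) * (7 * ρ + 1) / (3 * ρ + 5 / 4) := by
      field_simp; ring
    rw [this, le_div_iff₀ (by positivity)]
    nlinarith
  norm_num at *
  linarith

lemma Ef_d {ρ : ℝ} (hρ : 1 / 4 ≤ ρ) : Ef ρ ρ + Real.log 2 - 3.5 * ρ < 0 := by
  unfold Ef
  have h0 : 1 / 3 ≤ 2 * ρ / (ρ + 5 / 4) := by
    rw [div_le_div_iff₀ (by positivity) (by positivity)]; linarith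
  have h1 : 2 * ρ / (2 * ρ + ρ + 1) ≤ ρ * (8 / 7) := by
    rw [div_le_iff₀ (by positivity)]; nlinarith
  have h2 : (2 * ρ / (2 * ρ + ρ + 1)) / (2.9 + 2 * ρ / (ρ + 5 / 4)) ≤ 0.36 * ρ := by
    rw [div_le_iff₀ (by positivity)]
    norm_num at *
    nlinarith
  have h3 : ρ * (0.6 - 2 * ρ / (ρ + 5 / 4)) ≤ ρ * (0.6 - 1 / 3) :=
    mul_le_mul_of_nonneg_left (by linarith) (by linarith)
  have h4 := Real.log_two_lt_d9
  norm_num at *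
  linarith

lemma W3_ge {L ρ : ℝ} (hL : 7 / 2 ≤ L) (hρ : 0 < ρ) (hρ1 : ρ ≤ 1 / 4) :
    0.83 * Wf L ρ ≤ Wf L (3 * ρ) := by
  have h1 := lG_sub_le (show 0 < 1 + ρ by linarith) (show 1 + ρ ≤ 1 + 3 * ρ by linarith)
  have h2 := psi_upper (show 0 ≤ 3 * ρ by linarith) (by linarith)
  have h3 : 2 * (3 * ρ) / (1 + 3 * ρ) ≤ 6 / 7 := by
    rw [div_le_div_iff₀ (by positivity) (by positivity)]; linarith
  have h4 : lG (1 + 3 * ρ) ≤ lG (1 + ρ) + 0.18 := by norm_num at *; nlinarith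
  have h5 : Real.exp (-lG (1 + ρ)) * 0.83 ≤ Real.exp (-lG (1 + 3 * ρ)) := by
    have h6 : (0.83:ℝ) ≤ Real.exp (-0.18) := by
      have : Real.exp 0.18 ≤ 1 / 0.83 := exp_le_aux 8 (by norm_num) (by norm_num) (by norm_num)
        (by norm_num)
      rw [Real.exp_neg]
      rw [le_inv_comm₀ (by norm_num) (Real.exp_pos _), ← one_div]
      exact this
    calc _ ≤ Real.exp (-lG (1 + ρ)) * Real.exp (-0.18) :=
          mul_le_mul_of_nonneg_left h6 (Real.exp_pos _).le
      _ = Real.exp (-lG (1 + ρ) + -0.18) := by rw [Real.exp_add]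
      _ ≤ _ := Real.exp_le_exp.mpr (by linarith)
  have h7 : psi (1 + ρ) ≤ psi (1 + 3 * ρ) := psi_mono (by linarith) (by linarith)
  unfold Wf
  calc _ = (L + psi (1 + ρ)) * (Real.exp (-lG (1 + ρ)) * 0.83) := by ring
    _ ≤ _ := mul_le_mul (by linarith) h5 (by positivity) (Lpsi_pos hL (by linarith)).le

/-- The terms of the differentiated alternating series. -/
noncomputable def bt (L ρ : ℝ) (k : ℕ) : ℝ := k * Real.exp (-(L * ρ)) ^ k * Wf L (k * ρ)

lemma bt_anti {L ρ : ℝ} (hL : 7 / 2 ≤ L) (hρ : 0 < ρ) (hρ1 : ρ ≤ 1)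
    (hp : Real.exp (-(L * ρ)) ≤ 1 / 2) {k : ℕ} (hk : 3 ≤ k) : bt L ρ (k + 1) ≤ bt L ρ k := by
  have hk' : (3:ℝ) ≤ k := by exact_mod_cast hk
  have hx : 3 * ρ ≤ k * ρ := mul_le_mul_of_nonneg_right hk' hρ.le
  have h1 := Wf_step (L := L) (x := k * ρ) hL (by positivity) hρ.le hρ1
  have h2 : Real.exp (Ef ρ (k * ρ)) ≤ 3 / 2 := by
    refine (Real.exp_le_exp.mpr (Ef_a hρ hρ1 hx)).trans ?_
    exact exp_le_aux 1 (by norm_num) (by norm_num) (by norm_num) (by norm_num)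
  have hW := Wf_pos (L := L) (x := k * ρ) hL (by positivity)
  have h3 : Wf L (k * ρ + ρ) ≤ Wf L (k * ρ) * (3 / 2) :=
    h1.trans (mul_le_mul_of_nonneg_left h2 hW.le)
  unfold bt
  push_cast
  rw [show ((k:ℝ) + 1) * ρ = k * ρ + ρ by ring]
  have hp0 := Real.exp_pos (-(L * ρ))
  set p := Real.exp (-(L * ρ))
  calc ((k:ℝ) + 1) * p ^ (k + 1) * Wf L (k * ρ + ρ)
      ≤ ((k:ℝ) + 1) * p ^ (k + 1) * (Wf L (k * ρ) * (3 / 2)) :=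
        mul_le_mul_of_nonneg_left h3 (by positivity)
    _ = (p ^ k * Wf L (k * ρ)) * (((k:ℝ) + 1) * (3 / 2) * p) := by ring
    _ ≤ (p ^ k * Wf L (k * ρ)) * k := by
        apply mul_le_mul_of_nonneg_left _ (by positivity)
        nlinarith
    _ = _ := by ring

lemma bt_four {L ρ : ℝ} (hL : 7 / 2 ≤ L) (hρ : 0 < ρ) (hρ1 : ρ ≤ 1)
    (hp : Real.exp (-(L * ρ)) ≤ 1 / 2) : 0 < bt L ρ 1 - bt L ρ 2 + bt L ρ 3 - bt L ρ 4 := by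
  have hA := Wf_step (L := L) (x := ρ) hL hρ.le hρ.le hρ1
  rw [show ρ + ρ = 2 * ρ by ring] at hA
  have hW1 := Wf_pos (L := L) (x := ρ) hL hρ.le
  have hp0 := Real.exp_pos (-(L * ρ))
  rcases le_total (1 / 4) ρ with h | h
  · have h34 := bt_anti hL hρ hρ1 hp (le_refl 3)
    have h12 : bt L ρ 2 < bt L ρ 1 := by
      unfold bt
      norm_num
      have h1 : 2 * Real.exp (-(L * ρ)) * Real.exp (Ef ρ ρ) < 1 := by
        have h2 : 2 * Real.exp (-(L * ρ)) * Real.exp (Ef ρ ρ)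
            = Real.exp (Real.log 2 + -(L * ρ) + Ef ρ ρ) := by
          rw [Real.exp_add, Real.exp_add, Real.exp_log (by norm_num)]
        rw [h2, Real.exp_lt_one_iff]
        have := Ef_d h
        norm_num at *
        nlinarith
      set p := Real.exp (-(L * ρ))
      calc 2 * p ^ 2 * Wf L (2 * ρ) ≤ 2 * p ^ 2 * (Wf L ρ * Real.exp (Ef ρ ρ)) :=
            mul_le_mul_of_nonneg_left hA (by positivity)
        _ = (p * Wf L ρ) * (2 * p * Real.exp (Ef ρ ρ)) := by ring
        _ < (p * Wf L ρ) * 1 := mul_lt_mul_of_pos_left h1 (by positivity)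
        _ = _ := by ring
    norm_num at h34
    linarith
  · have hB := Wf_step (L := L) (x := 3 * ρ) hL (by positivity) hρ.le hρ1
    rw [show 3 * ρ + ρ = 4 * ρ by ring] at hB
    have hC := W3_ge hL hρ h
    have hW3 := Wf_pos (L := L) (x := 3 * ρ) hL (by positivity)
    have h1 : Real.exp (Ef ρ ρ) ≤ 1.17 := (Real.exp_le_exp.mpr (Ef_b hρ h)).trans
      (exp_le_aux 16 (by norm_num) (by norm_num) (by norm_num) (by norm_num))
    have h2 : Real.exp (Ef ρ (3 * ρ)) ≤ 1.076 := (Real.exp_le_exp.mpr (Ef_c hρ h)).trans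
      (exp_le_aux 16 (by norm_num) (by norm_num) (by norm_num) (by norm_num))
    have hA' := hA.trans (mul_le_mul_of_nonneg_left h1 hW1.le)
    have hB' := hB.trans (mul_le_mul_of_nonneg_left h2 hW3.le)
    unfold bt
    norm_num
    set p := Real.exp (-(L * ρ))
    set W1 := Wf L ρ
    set W2 := Wf L (2 * ρ)
    set W3 := Wf L (3 * ρ)
    set W4 := Wf L (4 * ρ)
    have e : p * W1 - 2 * p ^ 2 * W2 + 3 * p ^ 3 * W3 - 4 * p ^ 4 * W4
      = p * (W1 - 2 * p * W2 + p ^ 2 * (3 * W3 - 4 * p * W4)) := by ring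
    rw [← sub_pos, e]
    apply mul_pos hp0
    have k1 : 2 * p * W2 ≤ 2 * p * (W1 * 1.17) := mul_le_mul_of_nonneg_left hA' (by positivity)
    have k2 : 4 * p * W4 ≤ 4 * p * (W3 * 1.076) := mul_le_mul_of_nonneg_left hB' (by positivity)
    have k3 : p ^ 2 * (W3 * (3 - 4.304 * p)) ≤ p ^ 2 * (3 * W3 - 4 * p * W4) :=
      mul_le_mul_of_nonneg_left (by norm_num at *; linarith) (by positivity)
    have k4 : 0 ≤ p ^ 2 * (3 - 4.304 * p) := mul_nonneg (by positivity) (by norm_num; linarith)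
    have k5 := mul_le_mul_of_nonneg_right hC k4
    have k6 : 0 < 1 - 2.34 * p + 0.83 * (p ^ 2 * (3 - 4.304 * p)) := by
      have : 0 ≤ (1 / 2 - p) := by linarith
      norm_num
      nlinarith [mul_nonneg this hp0.le, mul_nonneg this (sq_nonneg p), sq_nonneg (1 / 2 - p)]
    have k7 := mul_pos hW1 k6
    norm_num at *
    nlinarith

lemma exp_neg_lG {x : ℝ} (hx : 0 ≤ x) : Real.exp (-lG (1 + x)) = (Real.Gamma (1 + x))⁻¹ := by
  rw [Real.exp_neg, lG, Real.exp_log (Real.Gamma_pos_of_pos (by linarith))]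

lemma exp_neg_lG_le {x : ℝ} (hx : 0 ≤ x) : Real.exp (-lG (1 + x)) ≤ 4 := by
  rw [exp_neg_lG hx]
  have := Gamma_ge hx
  rw [inv_le_comm₀ (by linarith) (by norm_num)]
  linarith

lemma term_eq {t L r : ℝ} (ht : 0 < t) (hL : L = -Real.log t) (hr : 0 ≤ r) (k : ℕ) :
    (-(t ^ r)) ^ k / Real.Gamma (r * k + 1)
      = (-1) ^ k * Real.exp (-(L * (k * r)) - lG (1 + k * r)) := by
  rw [sub_eq_add_neg, Real.exp_add, exp_neg_lG (by positivity), neg_pow,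
    Real.rpow_def_of_pos ht, ← Real.exp_nat_mul, hL, div_eq_mul_inv, mul_assoc]
  congr 3
  · ring
  · congr 1; ring

lemma term_hasDeriv {t L r : ℝ} (ht : 0 < t) (hL : L = -Real.log t) (hr : 0 < r) (k : ℕ) :
    HasDerivAt (fun r : ℝ => (-(t ^ r)) ^ k / Real.Gamma (r * k + 1))
      ((-1) ^ (k + 1) * bt L r k) r := by
  have h1 : HasDerivAt (fun r : ℝ => (k:ℝ) * r) k r := by
    simpa using (hasDerivAt_id r).const_mul (k:ℝ)
  have h2 : HasDerivAt (fun r : ℝ => lG (1 + k * r)) (psi (1 + k * r) * k) r := by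
    have h := (lG_hasDeriv (show 0 < 1 + k * r by positivity))
    exact HasDerivAt.comp (h₂ := lG) (h := fun r : ℝ => 1 + (k:ℝ) * r) r h (h1.const_add 1)
  have h3 := (((h1.const_mul L).neg.sub h2).exp).const_mul ((-1:ℝ) ^ k)
  refine (h3.congr_of_eventuallyEq ?_).congr_deriv ?_
  · filter_upwards [lt_mem_nhds hr] with y hy
    exact term_eq ht hL hy.le k
  · unfold bt Wf
    simp only [Pi.neg_apply, Pi.sub_apply]
    rw [sub_eq_add_neg, Real.exp_add, ← Real.exp_nat_mul,
      show (k:ℝ) * -(L * r) = -(L * (k * r)) by ring]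
    ring

lemma bt_bound {L r : ℝ} (hL : 7 / 2 ≤ L) (hr : 0 < r) (hr1 : r ≤ 1)
    (hp : Real.exp (-(L * r)) ≤ 1 / 2) (k : ℕ) :
    |bt L r k| ≤ 4 * (L + 1) * ((k:ℝ) ^ 1 * (1 / 2) ^ k) + 4 * ((k:ℝ) ^ 2 * (1 / 2) ^ k) := by
  have hx : 0 ≤ (k:ℝ) * r := by positivity
  have hx1 : (k:ℝ) * r ≤ k := mul_le_of_le_one_right (Nat.cast_nonneg k) hr1
  have h1 := psi_le_self hx
  have h2 := exp_neg_lG_le hx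
  have hW : Wf L (k * r) ≤ (L + 1 + k) * 4 :=
    mul_le_mul (by linarith) h2 (Real.exp_pos _).le (by positivity)
  have hW0 := Wf_pos hL hx
  have h3 : Real.exp (-(L * r)) ^ k ≤ (1 / 2) ^ k := pow_le_pow_left₀ (Real.exp_pos _).le hp k
  unfold bt
  rw [abs_of_nonneg (by positivity)]
  calc _ ≤ (k:ℝ) * (1 / 2) ^ k * ((L + 1 + k) * 4) :=
        mul_le_mul (mul_le_mul_of_nonneg_left h3 (Nat.cast_nonneg k)) hW hW0.le (by positivity)
    _ = _ := by ring

lemma bound_summable (L : ℝ) : Summable fun k : ℕ =>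
    4 * (L + 1) * ((k:ℝ) ^ 1 * (1 / 2) ^ k) + 4 * ((k:ℝ) ^ 2 * (1 / 2) ^ k) := by
  have h : ‖(1 / 2 : ℝ)‖ < 1 := by norm_num
  exact ((summable_pow_mul_geometric_of_norm_lt_one 1 h).mul_left _).add
    ((summable_pow_mul_geometric_of_norm_lt_one 2 h).mul_left _)

lemma alt_pos {L ρ : ℝ} (hL : 7 / 2 ≤ L) (hρ : 0 < ρ) (hρ1 : ρ ≤ 1)
    (hp : Real.exp (-(L * ρ)) ≤ 1 / 2) : 0 < ∑' k : ℕ, (-1) ^ (k + 1) * bt L ρ k := by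
  have hs : Summable fun k : ℕ => (-1) ^ (k + 1) * bt L ρ k := by
    refine Summable.of_norm_bounded (bound_summable L) (fun k => ?_)
    rw [norm_mul, norm_pow, norm_neg, norm_one, one_pow, one_mul]
    exact bt_bound hL hρ hρ1 hp k
  have h4 := bt_four hL hρ hρ1 hp
  refine lt_of_lt_of_le h4 ?_
  have ht := hs.hasSum.tendsto_sum_nat
  have hlim : Tendsto (fun n : ℕ => 2 * n + 5) atTop atTop :=
    tendsto_atTop_mono (fun n => by simp only [id]; omega) tendsto_id
  refine ge_of_tendsto' (ht.comp hlim) (fun n => ?_)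
  simp only [Function.comp]
  induction n with
  | zero =>
    simp only [Finset.sum_range_succ, Finset.sum_range_zero]
    norm_num [bt]
  | succ n ih =>
    rw [show 2 * (n + 1) + 5 = 2 * n + 5 + 1 + 1 by ring, Finset.sum_range_succ,
      Finset.sum_range_succ]
    have e1 : (-1 : ℝ) ^ (2 * n + 5 + 1) = 1 := Even.neg_one_pow ⟨n + 3, by ring⟩
    have e2 : (-1 : ℝ) ^ (2 * n + 5 + 1 + 1) = -1 := Odd.neg_one_pow ⟨n + 3, by ring⟩
    rw [e1, e2]
    have := bt_anti hL hρ hρ1 hp (show 3 ≤ 2 * n + 5 by omega)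
    linarith

theorem deriv_mittagLeffler_pos (ρ₀ t ρ : ℝ) (hρ₀ : ρ₀ ∈ Set.Ioo (0:ℝ) 1)
    (ht : t ∈ Set.Ioc 0 (min ((2:ℝ) ^ (-1 / ρ₀)) (Real.exp (-(7/2 : ℝ)))))
    (hρ : ρ ∈ Set.Ioo ρ₀ 1) :
    0 < deriv (fun r : ℝ => mittagLeffler r 1 (-(t ^ r))) ρ := by
  obtain ⟨ht0, ht1⟩ := ht
  obtain ⟨ha, hb⟩ := le_min_iff.mp ht1
  obtain ⟨L, hLdef⟩ : ∃ L, L = -Real.log t := ⟨_, rfl⟩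
  have hL : 7 / 2 ≤ L := by
    have := Real.log_le_log ht0 hb
    rw [Real.log_exp] at this
    linarith
  have hLρ₀ : Real.log 2 ≤ L * ρ₀ := by
    have := Real.log_le_log ht0 ha
    rw [Real.log_rpow (by norm_num)] at this
    have h2 : Real.log 2 / ρ₀ ≤ L := by
      rw [hLdef]
      have e : -1 / ρ₀ * Real.log 2 = -(Real.log 2 / ρ₀) := by ring
      rw [e] at this
      linarith
    rwa [div_le_iff₀ hρ₀.1] at h2
  have hp : ∀ r ∈ Set.Ioo ρ₀ 1, Real.exp (-(L * r)) ≤ 1 / 2 := by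
    intro r hr
    have h1 : L * ρ₀ ≤ L * r := mul_le_mul_of_nonneg_left hr.1.le (by linarith)
    calc Real.exp (-(L * r)) ≤ Real.exp (-Real.log 2) := Real.exp_le_exp.mpr (by linarith)
      _ = 1 / 2 := by rw [Real.exp_neg, Real.exp_log (by norm_num)]; norm_num
  have hpos : ∀ r ∈ Set.Ioo ρ₀ 1, 0 < r := fun r hr => hρ₀.1.trans hr.1
  have hsum : Summable fun k : ℕ => (-(t ^ ρ)) ^ k / Real.Gamma (ρ * k + 1) := by
    refine Summable.of_norm_bounded
      ((summable_geometric_of_lt_one (r := (1 / 2 : ℝ)) (by norm_num) (by norm_num)).mul_left 4)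
      (fun k => ?_)
    rw [term_eq ht0 hLdef (hpos ρ hρ).le, norm_mul, norm_pow, norm_neg, norm_one, one_pow, one_mul,
      Real.norm_eq_abs, abs_of_pos (Real.exp_pos _), sub_eq_add_neg, Real.exp_add,
      show -(L * (k * ρ)) = k * -(L * ρ) by ring, Real.exp_nat_mul, mul_comm (4:ℝ)]
    have hr0 := (hpos ρ hρ).le
    exact mul_le_mul (pow_le_pow_left₀ (Real.exp_pos _).le (hp ρ hρ) k)
      (exp_neg_lG_le (by positivity)) (Real.exp_pos _).le (by positivity)
  have hder : HasDerivAt (fun r : ℝ => ∑' k : ℕ, (-(t ^ r)) ^ k / Real.Gamma (r * k + 1))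
      (∑' k : ℕ, (-1) ^ (k + 1) * bt L ρ k) ρ := by
    refine hasDerivAt_tsum_of_isPreconnected
      (g := fun (k : ℕ) (r : ℝ) => (-(t ^ r)) ^ k / Real.Gamma (r * k + 1))
      (g' := fun k r => (-1) ^ (k + 1) * bt L r k)
      (bound_summable L) (isOpen_Ioo (a := ρ₀) (b := 1)) isPreconnected_Ioo
      (fun k r hr => term_hasDeriv ht0 hLdef (hpos r hr) k) (fun k r hr => ?_) hρ hsum hρ
    rw [norm_mul, norm_pow, norm_neg, norm_one, one_pow, one_mul]
    exact bt_bound hL (hpos r hr) hr.2.le (hp r hr) k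
  have : deriv (fun r : ℝ => mittagLeffler r 1 (-(t ^ r))) ρ
      = ∑' k : ℕ, (-1) ^ (k + 1) * bt L ρ k := hder.deriv
  rw [this]
  exact alt_pos hL (hpos ρ hρ) hρ.2.le (hp ρ hρ)
end
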